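/- arXiv:2508.18461 — 4 statements merged into one kernel-verified Lean document; each statement's English description precedes it below -/
import Mathlib

section
/- Let C be a strong divisibility sequence, let p be an ideal prime for C with parameter s = s(p), let n ≥ 0 have standard base-p representation n = n_ℓ ⋯ n_1 n_0, and let 0 ≤ r < α(p). Then T_{p,C}(α(p)·n + r, x) equals the matrix product [r+1, (α(p)−r−1)·x^{s−1}] · M_p(n_0) · M_p(n_1) ⋯ M_p(n_ℓ) · [1, 0]^T (a 1×1 matrix identified with a polynomial in ℤ[x]). -/
open Finset

/-- A strong divisibility sequence: nonzero integers `Cs 1, Cs 2, ...` with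
`gcd (Cs n) (Cs m) = |Cs (gcd n m)|`. -/
def IsStrongDivSeq (Cs : ℕ → ℤ) : Prop :=
  (∀ n, 1 ≤ n → Cs n ≠ 0) ∧
  ∀ m n, 1 ≤ m → 1 ≤ n → Int.gcd (Cs n) (Cs m) = (Cs (Nat.gcd n m)).natAbs

/-- `a` is the rank of apparition of `m` in the sequence `Cs`:
the least index `j ≥ 1` such that `m ∣ Cs j`. -/
def IsRank (Cs : ℕ → ℤ) (m a : ℕ) : Prop :=
  1 ≤ a ∧ (m : ℤ) ∣ Cs a ∧ ∀ j, 1 ≤ j → (m : ℤ) ∣ Cs j → a ≤ j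

/-- The `C`-orial: `0!_C = 1`, `n!_C = Cs 1 * Cs 2 * ⋯ * Cs n`. -/
def Corial (Cs : ℕ → ℤ) : ℕ → ℤ
  | 0 => 1
  | n + 1 => Corial Cs n * Cs (n + 1)

/-- `p` is an ideal prime for `Cs`, with `α k` the rank of apparition of `p ^ k`
and parameter `s = s(p)`. -/
def IdealPrime (Cs : ℕ → ℤ) (p : ℕ) (α : ℕ → ℕ) (s : ℕ) : Prop :=
  1 ≤ s ∧ (∀ k, 1 ≤ k → IsRank Cs (p ^ k) (α k)) ∧
  (∀ k, 1 ≤ k → k ≤ s → α k = α 1) ∧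
  (∀ k, s < k → α k = p ^ (k - s) * α 1)

/-- The `p`-adic valuation of the `C`-nomial coefficient `binom(n, m)_C`,
defined as `ν_p(n!_C) - ν_p(m!_C) - ν_p((n-m)!_C)` (an integer). -/
def nuCnomial (p : ℕ) (Cs : ℕ → ℤ) (n m : ℕ) : ℤ :=
  (padicValInt p (Corial Cs n) : ℤ) - (padicValInt p (Corial Cs m) : ℤ)
    - (padicValInt p (Corial Cs (n - m)) : ℤ)

/-- `T_{p,C}(n, x) = ∑_{m=0}^{n} x ^ ν_p(binom(n,m)_C)`, a polynomial in `ℤ[x]`. -/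
noncomputable def Tpoly (p : ℕ) (Cs : ℕ → ℤ) (n : ℕ) : Polynomial ℤ :=
  ∑ m ∈ Finset.range (n + 1), Polynomial.X ^ (nuCnomial p Cs n m).toNat

/-- Rowland's matrix `M_p(d)` with rows `(d+1, p-d-1)` and `(dx, (p-d)x)`. -/
noncomputable def Mmat (p d : ℕ) : Matrix (Fin 2) (Fin 2) (Polynomial ℤ) :=
  !![Polynomial.C ((d : ℤ) + 1), Polynomial.C ((p : ℤ) - d - 1);
     Polynomial.C (d : ℤ) * Polynomial.X, Polynomial.C ((p : ℤ) - d) * Polynomial.X]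

/-!
Strong divisibility and the shape of the ranks `α (p ^ k)` give
`ν_p(N!_C) = s * ⌊N / α(p)⌋ + ν_p(⌊N / α(p)⌋!)`, and Legendre's formula is the same identity for
ordinary factorials, with `p` in place of `α(p)` and `1` in place of `s`. So both the passage from
`C`-nomial to ordinary binomial coefficients and the removal of the lowest base-`p` digit are
instances of one recurrence. Dividing `i` and `j` by `a` in a sum over `i + j = a * n + q - 1`, the
quotients add up to `n` (when the remainders add up to `q - 1`, which happens in `q` ways) or to
`n - 1` (when they add up to `a + q - 1`, in `a - q` ways). Hence the polynomial attached to
`n! / (i! j!)`, `i + j = n`, and the one for `i + j = n - 1` together satisfy a linear recurrence in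
the digits of `n`, whose matrix is `M_p`.
-/

open Polynomial
open scoped Nat

section BlockSums

variable {M : Type*} [AddCommMonoid M]

theorem sum_range_mul_add (f : ℕ → M) (a n q : ℕ) :
    ∑ m ∈ range (a * n + q), f m =
      ∑ i ∈ range n, ∑ u ∈ range a, f (a * i + u) + ∑ u ∈ range q, f (a * n + u) := by
  rw [sum_range_add]
  congr 1
  induction n with
  | zero => simp
  | succ n ih => rw [Nat.mul_succ, sum_range_add, ih, sum_range_succ]

theorem mul_add_sub_mul_add_div_of_lt {a i n q u : ℕ} (hq : q ≤ a) (hi : i ≤ n) (hu : u < q) :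
    (a * n + q - 1 - (a * i + u)) / a = n - i := by
  obtain ⟨k, rfl⟩ := Nat.exists_eq_add_of_le hi
  have hsub : a * (i + k) + q - 1 - (a * i + u) = a * k + (q - 1 - u) := by
    rw [Nat.mul_add]; omega
  rw [hsub, Nat.mul_add_div (by omega), Nat.div_eq_of_lt (by omega)]
  omega

theorem mul_add_sub_mul_add_div_of_le {a i n q u : ℕ} (hi : i < n) (hqu : q ≤ u) (hu : u < a) :
    (a * n + q - 1 - (a * i + u)) / a = n - 1 - i := by
  obtain ⟨k, rfl⟩ := Nat.exists_eq_add_of_lt hi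
  have hsub : a * (i + k + 1) + q - 1 - (a * i + u) = a * k + (a + q - 1 - u) := by
    rw [Nat.mul_succ, Nat.mul_add]; omega
  rw [hsub, Nat.mul_add_div (by omega), Nat.div_eq_of_lt (by omega)]
  omega

theorem sum_range_mul_add_div_div {a q : ℕ} (hq : q ≤ a) (n : ℕ) (F : ℕ → ℕ → M) :
    ∑ m ∈ range (a * n + q), F (m / a) ((a * n + q - 1 - m) / a) =
      q • ∑ i ∈ range (n + 1), F i (n - i) + (a - q) • ∑ i ∈ range n, F i (n - 1 - i) := by
  have hdiv {i u : ℕ} (hu : u < a) : (a * i + u) / a = i := by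
    rw [Nat.mul_add_div (by omega), Nat.div_eq_of_lt hu, add_zero]
  have hsmall {i : ℕ} (hi : i ≤ n) : ∑ u ∈ range q,
      F ((a * i + u) / a) ((a * n + q - 1 - (a * i + u)) / a) = q • F i (n - i) := by
    refine (sum_eq_card_nsmul fun u hu => ?_).trans (congrArg (· • _) (card_range q))
    rw [mem_range] at hu
    rw [hdiv (by omega), mul_add_sub_mul_add_div_of_lt hq hi hu]
  have hlarge {i : ℕ} (hi : i < n) : ∑ u ∈ range (a - q),
      F ((a * i + (q + u)) / a) ((a * n + q - 1 - (a * i + (q + u))) / a) =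
        (a - q) • F i (n - 1 - i) := by
    refine (sum_eq_card_nsmul fun u hu => ?_).trans (congrArg (· • _) (card_range (a - q)))
    rw [mem_range] at hu
    rw [hdiv (by omega), mul_add_sub_mul_add_div_of_le hi (by omega) (by omega)]
  have hblock : ∀ i ∈ range n, ∑ u ∈ range a,
      F ((a * i + u) / a) ((a * n + q - 1 - (a * i + u)) / a) =
        q • F i (n - i) + (a - q) • F i (n - 1 - i) := by
    intro i hi
    rw [mem_range] at hi
    rw [← Nat.add_sub_cancel' hq, sum_range_add, Nat.add_sub_cancel' hq, hsmall hi.le, hlarge hi]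
  rw [sum_range_mul_add, sum_congr rfl hblock, hsmall le_rfl, sum_add_distrib, ← sum_nsmul,
    ← sum_nsmul, sum_range_succ, add_right_comm]

end BlockSums

section RatioSums

/-- The polynomial `∑ X ^ (f n - f i - f j)` over `i + j + 1 = N`. For `f k = ν_p(k!)` the exponents
are the valuations of `n! / (i! j!)`: binomial coefficients for `N = n + 1`, and the companion
family `n! / (i! (n - 1 - i)!)` for `N = n`. -/
noncomputable def ratioSum (f : ℕ → ℕ) (n N : ℕ) : ℤ[X] :=
  ∑ m ∈ range N, X ^ (f n - f m - f (N - 1 - m))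

/-- `g` arises from `f` by a Legendre-type formula with block length `a` and weight `t`; Legendre's
`ν_p(m!) = ⌊m / p⌋ + ν_p(⌊m / p⌋!)` is the case `f = g = ν_p(·!)`, `a = p`, `t = 1`. -/
def IsLegendreLift (g f : ℕ → ℕ) (a t : ℕ) : Prop :=
  ∀ m, g m = t * (m / a) + f (m / a)

variable {f g : ℕ → ℕ} {a t : ℕ}

theorem IsLegendreLift.ratioSum_mul_add (hg : IsLegendreLift g f a t)
    (hf : ∀ i j, f i + f j ≤ f (i + j + 1)) {q r : ℕ} (hq : q ≤ a) (hr : r < a) (n : ℕ) :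
    ratioSum g (a * n + r) (a * n + q) =
      (q : ℤ[X]) * ratioSum f n (n + 1) + ((a : ℤ[X]) - (q : ℤ[X])) * (X ^ t * ratioSum f n n) := by
  have hgn : g (a * n + r) = t * n + f n := by
    rw [hg, Nat.mul_add_div (by omega), Nat.div_eq_of_lt hr, add_zero]
  have hbinom : ∀ i ∈ range (n + 1), (X : ℤ[X]) ^
      (t * n + f n - (t * i + f i) - (t * (n - i) + f (n - i))) =
        X ^ (f n - f i - f (n - i)) := by
    intro i hi
    obtain ⟨j, rfl⟩ := Nat.exists_eq_add_of_le (mem_range_succ_iff.1 hi)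
    rw [Nat.add_sub_cancel_left, Nat.mul_add]
    congr 1
    omega
  have hcompanion : ∀ i ∈ range n, (X : ℤ[X]) ^
      (t * n + f n - (t * i + f i) - (t * (n - 1 - i) + f (n - 1 - i))) =
        X ^ t * X ^ (f n - f i - f (n - 1 - i)) := by
    intro i hi
    obtain ⟨j, rfl⟩ := Nat.exists_eq_add_of_lt (mem_range.1 hi)
    -- This rules out truncation in the exponent `f n - f i - f j`.
    have hfij := hf i j
    rw [← pow_add, Nat.add_sub_cancel, Nat.add_sub_cancel_left, Nat.mul_succ, Nat.mul_add]
    congr 1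
    omega
  have hsum := sum_range_mul_add_div_div hq n fun i j =>
    (X : ℤ[X]) ^ (t * n + f n - (t * i + f i) - (t * j + f j))
  rw [sum_congr rfl hbinom, sum_congr rfl hcompanion, ← mul_sum] at hsum
  simp only [nsmul_eq_mul, Nat.cast_sub hq] at hsum
  simpa only [ratioSum, hgn, hg _, Nat.add_sub_cancel] using hsum

end RatioSums

section Factorial

variable {p : ℕ}

variable (p) in
/-- The column vector on which Rowland's matrices act: its entries are the polynomial
`∑ m, X ^ ν_p(n.choose m)` and `X` times its companion. -/
noncomputable def binomialVec (n : ℕ) : Matrix (Fin 2) (Fin 1) ℤ[X] :=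
  !![ratioSum (fun m => padicValNat p m !) n (n + 1);
     X * ratioSum (fun m => padicValNat p m !) n n]

theorem binomialVec_zero : binomialVec p 0 = !![1; 0] := by
  simp [binomialVec, ratioSum]

variable [Fact p.Prime]

theorem isLegendreLift_padicValNat_factorial :
    IsLegendreLift (fun m => padicValNat p m !) (fun m => padicValNat p m !) p 1 := fun m => by
  dsimp only
  rw [← padicValNat_mul_div_factorial, padicValNat_factorial_mul, one_mul, add_comm]

theorem padicValNat_factorial_add_padicValNat_factorial_le (i j : ℕ) :
    padicValNat p i ! + padicValNat p j ! ≤ padicValNat p (i + j + 1)! := by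
  rw [← padicValNat.mul i.factorial_ne_zero j.factorial_ne_zero,
    ← padicValNat_dvd_iff_le (Nat.factorial_ne_zero _)]
  exact pow_padicValNat_dvd.trans <| (Nat.factorial_mul_factorial_dvd_factorial_add i j).trans <|
    Nat.factorial_dvd_factorial (Nat.le_succ _)

theorem Mmat_mul_binomialVec {d : ℕ} (hd : d < p) (n : ℕ) :
    Mmat p d * binomialVec p n = binomialVec p (p * n + d) := by
  have hrec {q : ℕ} (hq : q ≤ p) := isLegendreLift_padicValNat_factorial.ratioSum_mul_add
    padicValNat_factorial_add_padicValNat_factorial_le hq hd n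
  have hbinom := hrec (Nat.succ_le_of_lt hd)
  have hcompanion := hrec hd.le
  rw [binomialVec, binomialVec, add_assoc, hbinom, hcompanion, Mmat]
  refine Matrix.ext fun i j => ?_
  fin_cases i <;> fin_cases j <;>
  · simp only [Fin.mk_one, Fin.zero_eta, Matrix.mul_apply, Fin.sum_univ_two, Matrix.of_apply,
      Matrix.cons_val', Matrix.cons_val_fin_one, Matrix.cons_val_zero, Matrix.cons_val_one,
      eq_intCast]
    push_cast
    ring

theorem prod_map_Mmat_mul_eq_binomialVec_ofDigits {L : List ℕ} (hL : ∀ d ∈ L, d < p) :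
    (L.map (Mmat p)).prod * (!![1; 0] : Matrix (Fin 2) (Fin 1) ℤ[X]) =
      binomialVec p (Nat.ofDigits p L) := by
  induction L with
  | nil => rw [List.map_nil, List.prod_nil, Matrix.one_mul, Nat.ofDigits_nil, binomialVec_zero]
  | cons d L ih =>
    obtain ⟨hd, hL⟩ := List.forall_mem_cons.1 hL
    rw [List.map_cons, List.prod_cons, Matrix.mul_assoc, ih hL, Mmat_mul_binomialVec hd,
      Nat.ofDigits_cons, add_comm]

end Factorial

section StrongDivisibility

variable {Cs : ℕ → ℤ} {p s : ℕ} {α : ℕ → ℕ}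

theorem IsRank.dvd_iff (hC : IsStrongDivSeq Cs) {m a j : ℕ} (ha : IsRank Cs m a) (hj : 1 ≤ j) :
    (m : ℤ) ∣ Cs j ↔ a ∣ j := by
  obtain ⟨ha_pos, hm_dvd, ha_le⟩ := ha
  have hgcd := hC.2 a j ha_pos hj
  constructor
  · intro hmj
    have hm_gcd : (m : ℤ) ∣ Cs (Nat.gcd j a) :=
      Int.natCast_dvd.2 <| hgcd ▸ Int.dvd_gcd hmj hm_dvd
    have hle : a ≤ Nat.gcd j a := ha_le _ (Nat.gcd_pos_of_pos_left _ hj) hm_gcd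
    exact Nat.gcd_eq_right_iff_dvd.1 ((Nat.gcd_le_right _ ha_pos).antisymm hle)
  · intro haj
    rw [Nat.gcd_eq_right haj] at hgcd
    exact hm_dvd.trans <| Int.natAbs_dvd.1 <| hgcd ▸ Int.gcd_dvd_left ..

theorem IsStrongDivSeq.corial_ne_zero (hC : IsStrongDivSeq Cs) (n : ℕ) : Corial Cs n ≠ 0 := by
  induction n with
  | zero => exact one_ne_zero
  | succ n ih => exact mul_ne_zero ih (hC.1 _ n.succ_pos)

theorem IdealPrime.rank_add (hid : IdealPrime Cs p α s) (v : ℕ) : α (s + v) = α 1 * p ^ v := by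
  obtain ⟨hs, -, hconst, hgeom⟩ := hid
  rcases v.eq_zero_or_pos with rfl | hv
  · rw [add_zero, pow_zero, mul_one, hconst s hs le_rfl]
  · rw [hgeom _ (by omega), Nat.add_sub_cancel_left, mul_comm]

theorem IdealPrime.padicValInt_eq_zero (hC : IsStrongDivSeq Cs) (hid : IdealPrime Cs p α s)
    {j : ℕ} (hj : 1 ≤ j) (hdvd : ¬ α 1 ∣ j) : padicValInt p (Cs j) = 0 := by
  have hrank := (hid.2.1 1 le_rfl).dvd_iff hC hj
  rw [pow_one] at hrank
  exact padicValInt.eq_zero_of_not_dvd (hrank.not.2 hdvd)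

variable [Fact p.Prime]

theorem IdealPrime.padicValInt_rank_mul (hC : IsStrongDivSeq Cs) (hid : IdealPrime Cs p α s)
    {k : ℕ} (hk : 1 ≤ k) : padicValInt p (Cs (α 1 * k)) = s + padicValNat p k := by
  have hα : 0 < α 1 := (hid.2.1 1 le_rfl).1
  have hαk : 1 ≤ α 1 * k := Nat.mul_pos hα hk
  have hle_iff (v : ℕ) : s + v ≤ padicValInt p (Cs (α 1 * k)) ↔ v ≤ padicValNat p k := by
    have hrank := (hid.2.1 (s + v) (le_add_right hid.1)).dvd_iff hC hαk
    rwa [Nat.cast_pow, padicValInt_dvd_iff, or_iff_right (hC.1 _ hαk), hid.rank_add,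
      Nat.mul_dvd_mul_iff_left hα, padicValNat_dvd_iff_le (by omega)] at hrank
  have hge := (hle_iff (padicValNat p k)).2 le_rfl
  have hlt := (hle_iff (padicValNat p k + 1)).not.2 (by omega)
  omega

theorem IdealPrime.isLegendreLift_padicValInt_corial (hC : IsStrongDivSeq Cs)
    (hid : IdealPrime Cs p α s) :
    IsLegendreLift (fun N => padicValInt p (Corial Cs N)) (fun m => padicValNat p m !) (α 1) s := by
  intro N
  induction N with
  | zero => simp [Corial]
  | succ N ih =>
    dsimp only at ih ⊢
    rw [Corial, padicValInt.mul (hC.corial_ne_zero N) (hC.1 _ N.succ_pos), ih]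
    by_cases hdvd : α 1 ∣ N + 1
    · have hN : N + 1 = α 1 * (N / α 1 + 1) := by
        rw [← Nat.succ_div_of_dvd hdvd, Nat.mul_div_cancel' hdvd]
      rw [Nat.succ_div_of_dvd hdvd, congrArg Cs hN, hid.padicValInt_rank_mul hC (Nat.succ_pos _),
        Nat.factorial_succ, padicValNat.mul (Nat.succ_ne_zero _) (Nat.factorial_ne_zero _)]
      ring
    · rw [Nat.succ_div_of_not_dvd hdvd, hid.padicValInt_eq_zero hC N.succ_pos hdvd, add_zero]

end StrongDivisibility

theorem Tpoly_eq_ratioSum (p : ℕ) (Cs : ℕ → ℤ) (n : ℕ) :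
    Tpoly p Cs n = ratioSum (fun m => padicValInt p (Corial Cs m)) n (n + 1) := by
  refine sum_congr rfl fun m _ => ?_
  dsimp only
  rw [nuCnomial, Nat.add_sub_cancel]
  congr 1
  omega

theorem stmt0 (Cs : ℕ → ℤ) (p : ℕ) (hp : p.Prime) (α : ℕ → ℕ) (s : ℕ)
    (hC : IsStrongDivSeq Cs) (hid : IdealPrime Cs p α s)
    (n r : ℕ) (hr : r < α 1) :
    Tpoly p Cs (α 1 * n + r) =
      (!![Polynomial.C ((r : ℤ) + 1),
          Polynomial.C ((α 1 : ℤ) - r - 1) * Polynomial.X ^ (s - 1)] *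
        ((Nat.digits p n).map (Mmat p)).prod * (!![1; 0] : Matrix (Fin 2) (Fin 1) (Polynomial ℤ))) 0 0 := by
  have : Fact p.Prime := ⟨hp⟩
  have hdigits : ((Nat.digits p n).map (Mmat p)).prod * (!![1; 0] : Matrix (Fin 2) (Fin 1) ℤ[X]) =
      binomialVec p n := by
    rw [prod_map_Mmat_mul_eq_binomialVec_ofDigits fun _ => Nat.digits_lt_base hp.one_lt,
      Nat.ofDigits_digits]
  have hrec := (hid.isLegendreLift_padicValInt_corial hC).ratioSum_mul_add
    padicValNat_factorial_add_padicValNat_factorial_le (Nat.succ_le_of_lt hr) hr n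
  have hX : (X : ℤ[X]) ^ s = X ^ (s - 1) * X :=
    (pow_sub_one_mul (Nat.one_le_iff_ne_zero.1 hid.1) X).symm
  rw [Tpoly_eq_ratioSum, add_assoc, hrec, Matrix.mul_assoc, hdigits, binomialVec, hX]
  simp only [Matrix.mul_apply, Fin.sum_univ_two, Matrix.of_apply, Matrix.cons_val',
    Matrix.cons_val_fin_one, Matrix.cons_val_zero, Matrix.cons_val_one, eq_intCast]
  push_cast
  ring
end

section
/- Let C be a strong divisibility sequence and p a prime such that the rank of apparition α(p^k) exists for all k ≥ 1. Then for every integer n ≥ 0, ν_p(n!_C) = Σ_{k ≥ 1} ⌊n / α(p^k)⌋, where all but finitely many terms of the sum are zero. -/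
open Finset

/-!
In a strong divisibility sequence the indices `m` with `p ^ k ∣ C m` are exactly the multiples of
the rank of apparition of `p ^ k`. Summing `ν_p (C m) = #{k ≥ 1 | p ^ k ∣ C m}` over `1 ≤ m ≤ n` and
counting the pairs `(m, k)` by `k` first turns `ν_p (n!_C)` into the sum over `k` of the number of
multiples of that rank up to `n`, as in Legendre's formula for `n!`.
-/

section Valuation

variable {p b : ℕ}

theorem padicValInt_eq_card_pow_dvd (hp : p ≠ 1) {x : ℤ} (hx : x ≠ 0)
    (hb : padicValInt p x ≤ b) :
    padicValInt p x = #{k ∈ Ioc 0 b | (p : ℤ) ^ k ∣ x} := by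
  have exponents : {k ∈ Ioc 0 b | (p : ℤ) ^ k ∣ x} = Ioc 0 (padicValInt p x) := by
    ext k
    simp only [mem_filter, mem_Ioc, padicValInt_dvd_iff_of_ne_one hp, hx, false_or]
    lia
  rw [exponents, Nat.card_Ioc, Nat.sub_zero]

variable [Fact p.Prime] {ι : Type*} {s : Finset ι} {f : ι → ℤ}

theorem padicValInt_prod (hf : ∀ i ∈ s, f i ≠ 0) :
    padicValInt p (∏ i ∈ s, f i) = ∑ i ∈ s, padicValInt p (f i) := by
  induction s using Finset.cons_induction with
  | empty => simp
  | cons i s hi ih =>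
    obtain ⟨hfi, hfs⟩ := (forall_mem_cons hi _).mp hf
    rw [prod_cons, sum_cons, padicValInt.mul hfi (prod_ne_zero_iff.mpr hfs), ih hfs]

theorem padicValInt_prod_eq_sum_card_pow_dvd (hf : ∀ i ∈ s, f i ≠ 0)
    (hb : ∀ i ∈ s, padicValInt p (f i) ≤ b) :
    padicValInt p (∏ i ∈ s, f i) = ∑ k ∈ Ioc 0 b, #{i ∈ s | (p : ℤ) ^ k ∣ f i} := by
  have hp : p ≠ 1 := (Fact.out : p.Prime).ne_one
  calc padicValInt p (∏ i ∈ s, f i)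
      = ∑ i ∈ s, padicValInt p (f i) := padicValInt_prod hf
    _ = ∑ i ∈ s, #{k ∈ Ioc 0 b | (p : ℤ) ^ k ∣ f i} :=
        sum_congr rfl fun i hi ↦ padicValInt_eq_card_pow_dvd hp (hf i hi) (hb i hi)
    _ = ∑ k ∈ Ioc 0 b, #{i ∈ s | (p : ℤ) ^ k ∣ f i} :=
        sum_card_bipartiteAbove_eq_sum_card_bipartiteBelow fun i k ↦ (p : ℤ) ^ k ∣ f i

end Valuation

section StrongDivSeq

theorem corial_eq_prod_Ioc (Cs : ℕ → ℤ) (n : ℕ) : Corial Cs n = ∏ m ∈ Ioc 0 n, Cs m := by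
  induction n with
  | zero => rfl
  | succ n ih => rw [Corial, ih, prod_Ioc_succ_top n.zero_le]

variable {Cs : ℕ → ℤ}

theorem IsRank.le_padicValInt {p k a : ℕ} (hp : p ≠ 1) (ha : IsRank Cs (p ^ k) a)
    (hCa : Cs a ≠ 0) : k ≤ padicValInt p (Cs a) := by
  have pow_dvd : (p : ℤ) ^ k ∣ Cs a := mod_cast ha.2.1
  exact ((padicValInt_dvd_iff_of_ne_one hp k (Cs a)).mp pow_dvd).resolve_left hCa

namespace IsStrongDivSeq

theorem dvd_apply_gcd_iff (hC : IsStrongDivSeq Cs) {m n : ℕ} (hm : 1 ≤ m) (hn : 1 ≤ n) (d : ℤ) :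
    d ∣ Cs (m.gcd n) ↔ d ∣ Cs m ∧ d ∣ Cs n := by
  rw [← Int.dvd_natAbs, ← hC.2 n m hn hm, Int.dvd_coe_gcd_iff]

theorem dvd_apply_iff_rank_dvd (hC : IsStrongDivSeq Cs) {q a m : ℕ} (ha : IsRank Cs q a)
    (hm : 1 ≤ m) : (q : ℤ) ∣ Cs m ↔ a ∣ m := by
  obtain ⟨one_le_a, q_dvd, a_least⟩ := ha
  have q_dvd_gcd_iff := hC.dvd_apply_gcd_iff hm one_le_a q
  constructor
  · intro q_dvd_m
    have a_le_gcd : a ≤ m.gcd a :=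
      a_least _ (Nat.gcd_pos_of_pos_left a hm) (q_dvd_gcd_iff.mpr ⟨q_dvd_m, q_dvd⟩)
    exact Nat.gcd_eq_right_iff_dvd.mp (le_antisymm (Nat.gcd_le_right m one_le_a) a_le_gcd)
  · intro a_dvd_m
    rw [Nat.gcd_eq_right a_dvd_m] at q_dvd_gcd_iff
    exact (q_dvd_gcd_iff.mp q_dvd).1

theorem card_dvd_apply_eq_div_rank (hC : IsStrongDivSeq Cs) {q a : ℕ} (ha : IsRank Cs q a)
    (n : ℕ) : #{m ∈ Ioc 0 n | (q : ℤ) ∣ Cs m} = n / a := by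
  rw [← Nat.Ioc_filter_dvd_card_eq_div]
  congr 1
  exact filter_congr fun m hm ↦ hC.dvd_apply_iff_rank_dvd ha (mem_Ioc.mp hm).1

theorem padicValInt_corial (hC : IsStrongDivSeq Cs) {p : ℕ} (hp : p.Prime) {α : ℕ → ℕ} {n b : ℕ}
    (hα : ∀ k ∈ Ioc 0 b, IsRank Cs (p ^ k) (α k))
    (hb : ∀ m ∈ Ioc 0 n, padicValInt p (Cs m) ≤ b) :
    padicValInt p (Corial Cs n) = ∑ k ∈ Ioc 0 b, n / α k := by
  have : Fact p.Prime := ⟨hp⟩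
  have terms_ne_zero : ∀ m ∈ Ioc 0 n, Cs m ≠ 0 := fun m hm ↦ hC.1 m (mem_Ioc.mp hm).1
  rw [corial_eq_prod_Ioc, padicValInt_prod_eq_sum_card_pow_dvd terms_ne_zero hb]
  refine sum_congr rfl fun k hk ↦ ?_
  exact_mod_cast hC.card_dvd_apply_eq_div_rank (hα k hk) n

end IsStrongDivSeq

end StrongDivSeq

theorem stmt4 (Cs : ℕ → ℤ) (p : ℕ) (hp : p.Prime) (α : ℕ → ℕ)
    (hC : IsStrongDivSeq Cs) (hα : ∀ k, 1 ≤ k → IsRank Cs (p ^ k) (α k))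
    (n : ℕ) :
    {k : ℕ | 1 ≤ k ∧ n / α k ≠ 0}.Finite ∧
      padicValInt p (Corial Cs n) = ∑ᶠ k ∈ Set.Ici 1, n / α k := by
  let b := (Ioc 0 n).sup fun m ↦ padicValInt p (Cs m)
  have valuation_le : ∀ m ∈ Ioc 0 n, padicValInt p (Cs m) ≤ b := fun m hm ↦
    le_sup (f := fun m ↦ padicValInt p (Cs m)) hm
  have support_subset : {k : ℕ | 1 ≤ k ∧ n / α k ≠ 0} ⊆ Ioc 0 b := by
    rintro k ⟨one_le_k, quotient_ne_zero⟩
    have rank_pos : 1 ≤ α k := (hα k one_le_k).1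
    have rank_le : α k ≤ n := (Nat.div_ne_zero_iff.mp quotient_ne_zero).2
    have k_le : k ≤ padicValInt p (Cs (α k)) :=
      (hα k one_le_k).le_padicValInt hp.ne_one (hC.1 _ rank_pos)
    exact mem_Ioc.mpr ⟨one_le_k, k_le.trans (valuation_le _ (mem_Ioc.mpr ⟨rank_pos, rank_le⟩))⟩
  refine ⟨(Ioc 0 b).finite_toSet.subset support_subset, ?_⟩
  rw [hC.padicValInt_corial hp (fun k hk ↦ hα k (mem_Ioc.mp hk).1) valuation_le]
  exact (finsum_mem_eq_sum_of_subset _ support_subset fun k hk ↦ (mem_Ioc.mp hk).1).symm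
end

section
/- Let C be a strong divisibility sequence, let p be an ideal prime for C with parameter s = s(p), and write α = α(p). Let n = α·n' + r, m_1 = α·m_1' + r_1, m_2 = α·m_2' + r_2 with n', m_1', m_2' ≥ 0, 0 ≤ r, r_1, r_2 < α, and m_1 + m_2 = n. Then ν_p(binom(n, m_1)_C) = s·(n' − m_1' − m_2') + ν_p(n'!) − ν_p(m_1'!) − ν_p(m_2'!). -/
open Finset

/-!
By strong divisibility, `p ^ k ∣ C_j` exactly when the rank of apparition of `p ^ k` divides `j`.
As `p` is ideal, this rank is `p ^ (k - s) * α`, so `C_j` has `p`-adic valuation `0` unless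
`j = α * t`, in which case it has valuation `s + ν_p(t)`. Multiplying over `1 ≤ j ≤ n`, only the
multiples of `α` contribute, whence `ν_p(n!_C) = s * ⌊n / α⌋ + ν_p(⌊n / α⌋!)`.
-/

namespace IsStrongDivSeq

variable {Cs : ℕ → ℤ}

theorem dvd_of_dvd (hC : IsStrongDivSeq Cs) {i j : ℕ} (hj : 1 ≤ j) (hij : i ∣ j) :
    Cs i ∣ Cs j := by
  have hi : 1 ≤ i := Nat.pos_of_dvd_of_pos hij hj
  have hgcd : Int.gcd (Cs j) (Cs i) = (Cs i).natAbs := by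
    rw [hC.2 i j hi hj, Nat.gcd_eq_right hij]
  exact Int.natAbs_dvd.mp (hgcd ▸ Int.gcd_dvd_left (Cs j) (Cs i))

theorem dvd_apply_gcd (hC : IsStrongDivSeq Cs) {i j : ℕ} (hi : 1 ≤ i) (hj : 1 ≤ j) {d : ℤ}
    (hdi : d ∣ Cs i) (hdj : d ∣ Cs j) : d ∣ Cs (Nat.gcd i j) := by
  rw [← Int.dvd_natAbs, ← hC.2 j i hj hi]
  exact Int.dvd_coe_gcd hdi hdj

theorem dvd_iff_rank_dvd (hC : IsStrongDivSeq Cs) {m a : ℕ} (ha : IsRank Cs m a) {j : ℕ}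
    (hj : 1 ≤ j) : (m : ℤ) ∣ Cs j ↔ a ∣ j := by
  obtain ⟨ha_pos, hma, ha_min⟩ := ha
  refine ⟨fun hmj ↦ ?_, fun haj ↦ hma.trans (hC.dvd_of_dvd hj haj)⟩
  have hle : a ≤ Nat.gcd a j :=
    ha_min _ (Nat.gcd_pos_of_pos_left j ha_pos) (hC.dvd_apply_gcd ha_pos hj hma hmj)
  exact Nat.gcd_eq_left_iff_dvd.mp ((Nat.gcd_le_left j ha_pos).antisymm hle)

theorem corial_ne_zero_s7 (hC : IsStrongDivSeq Cs) (n : ℕ) : Corial Cs n ≠ 0 := by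
  induction n with
  | zero => exact one_ne_zero
  | succ n ih => exact mul_ne_zero ih (hC.1 (n + 1) n.succ_pos)

theorem padicValInt_corial_succ (hC : IsStrongDivSeq Cs) (p : ℕ) [Fact p.Prime] (n : ℕ) :
    padicValInt p (Corial Cs (n + 1)) =
      padicValInt p (Corial Cs n) + padicValInt p (Cs (n + 1)) :=
  padicValInt.mul (hC.corial_ne_zero_s7 n) (hC.1 (n + 1) n.succ_pos)

end IsStrongDivSeq

namespace IdealPrime

variable {Cs : ℕ → ℤ} {p : ℕ} {α : ℕ → ℕ} {s : ℕ}

theorem rank_one_pos (hid : IdealPrime Cs p α s) : 0 < α 1 :=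
  (hid.2.1 1 le_rfl).1

-- Truncated subtraction merges the two cases `k ≤ s` and `s < k` of the definition.
theorem rank_eq_pow_mul (hid : IdealPrime Cs p α s) {k : ℕ} (hk : 1 ≤ k) :
    α k = p ^ (k - s) * α 1 := by
  rcases le_or_gt k s with hks | hsk
  · rw [hid.2.2.1 k hk hks, Nat.sub_eq_zero_of_le hks, pow_zero, one_mul]
  · exact hid.2.2.2 k hsk

theorem pow_dvd_apply_rank_mul_iff (hid : IdealPrime Cs p α s) (hC : IsStrongDivSeq Cs)
    {k t : ℕ} (ht : 1 ≤ t) : (p : ℤ) ^ k ∣ Cs (α 1 * t) ↔ p ^ (k - s) ∣ t := by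
  rcases Nat.eq_zero_or_pos k with rfl | hk
  · simp
  · rw [← Nat.cast_pow, hC.dvd_iff_rank_dvd (hid.2.1 k hk) (Nat.mul_pos hid.rank_one_pos ht),
      hid.rank_eq_pow_mul hk, mul_comm, Nat.mul_dvd_mul_iff_left hid.rank_one_pos]

theorem padicValInt_apply_rank_mul (hid : IdealPrime Cs p α s) (hC : IsStrongDivSeq Cs)
    (hp : p ≠ 1) {t : ℕ} (ht : 1 ≤ t) :
    padicValInt p (Cs (α 1 * t)) = s + padicValNat p t := by
  have hne : Cs (α 1 * t) ≠ 0 := hC.1 _ (Nat.mul_pos hid.rank_one_pos ht)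
  refine eq_of_forall_le_iff fun k ↦ ?_
  calc k ≤ padicValInt p (Cs (α 1 * t))
      ↔ (p : ℤ) ^ k ∣ Cs (α 1 * t) := by
        rw [padicValInt_dvd_iff_of_ne_one hp, or_iff_right hne]
    _ ↔ p ^ (k - s) ∣ t := hid.pow_dvd_apply_rank_mul_iff hC ht
    _ ↔ k - s ≤ padicValNat p t :=
        padicValNat_dvd_iff_le_of_ne_one hp (Nat.one_le_iff_ne_zero.mp ht)
    _ ↔ k ≤ s + padicValNat p t := tsub_le_iff_left

theorem padicValInt_apply_eq_zero (hid : IdealPrime Cs p α s) (hC : IsStrongDivSeq Cs)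
    {j : ℕ} (hj : 1 ≤ j) (hdvd : ¬ α 1 ∣ j) : padicValInt p (Cs j) = 0 := by
  have hp_dvd : (p : ℤ) ∣ Cs j ↔ α 1 ∣ j := by
    simpa only [pow_one] using hC.dvd_iff_rank_dvd (hid.2.1 1 le_rfl) hj
  exact padicValNat.eq_zero_of_not_dvd fun h ↦ hdvd (hp_dvd.mp (Int.natCast_dvd.mpr h))

theorem padicValInt_corial [Fact p.Prime] (hid : IdealPrime Cs p α s) (hC : IsStrongDivSeq Cs)
    (n : ℕ) :
    padicValInt p (Corial Cs n) = s * (n / α 1) + padicValNat p (n / α 1).factorial := by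
  induction n with
  | zero => simp [Corial]
  | succ n ih =>
    rw [hC.padicValInt_corial_succ, ih]
    by_cases hdvd : α 1 ∣ n + 1
    · have hdiv : (n + 1) / α 1 = n / α 1 + 1 := Nat.succ_div_of_dvd hdvd
      have hval : padicValInt p (Cs (n + 1)) = s + padicValNat p (n / α 1 + 1) := by
        rw [← hid.padicValInt_apply_rank_mul hC (Fact.out : p.Prime).ne_one (Nat.le_add_left 1 _),
          ← hdiv, Nat.mul_div_cancel' hdvd]
      rw [hval, hdiv, Nat.factorial_succ,
        padicValNat.mul (Nat.succ_ne_zero _) (Nat.factorial_ne_zero _)]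
      ring
    · rw [hid.padicValInt_apply_eq_zero hC n.succ_pos hdvd, Nat.succ_div_of_not_dvd hdvd, add_zero]

theorem padicValInt_corial_mul_add [Fact p.Prime] (hid : IdealPrime Cs p α s)
    (hC : IsStrongDivSeq Cs) (q : ℕ) {r : ℕ} (hr : r < α 1) :
    padicValInt p (Corial Cs (α 1 * q + r)) = s * q + padicValNat p q.factorial := by
  rw [hid.padicValInt_corial hC, Nat.mul_add_div hid.rank_one_pos, Nat.div_eq_of_lt hr, add_zero]

end IdealPrime

theorem stmt7 (Cs : ℕ → ℤ) (p : ℕ) (hp : p.Prime) (α : ℕ → ℕ) (s : ℕ)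
    (hC : IsStrongDivSeq Cs) (hid : IdealPrime Cs p α s)
    (n n' r m1 m1' r1 m2 m2' r2 : ℕ)
    (hn : n = α 1 * n' + r) (hm1 : m1 = α 1 * m1' + r1) (hm2 : m2 = α 1 * m2' + r2)
    (hr : r < α 1) (hr1 : r1 < α 1) (hr2 : r2 < α 1) (hsum : m1 + m2 = n) :
    nuCnomial p Cs n m1 =
      (s : ℤ) * ((n' : ℤ) - m1' - m2') + (padicValNat p (Nat.factorial n') : ℤ)
        - (padicValNat p (Nat.factorial m1') : ℤ)
        - (padicValNat p (Nat.factorial m2') : ℤ) := by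
  have : Fact p.Prime := ⟨hp⟩
  have hsub : n - m1 = m2 := by omega
  rw [nuCnomial, hsub, hn, hm1, hm2, hid.padicValInt_corial_mul_add hC n' hr,
    hid.padicValInt_corial_mul_add hC m1' hr1, hid.padicValInt_corial_mul_add hC m2' hr2]
  push_cast
  ring
end

section
/- Let p be a prime and let n ≥ 0 have standard base-p representation n = n_ℓ ⋯ n_1 n_0. Then the matrix product M_p(n_0) · M_p(n_1) ⋯ M_p(n_ℓ) · [1, 0]^T equals the column vector whose first entry is Σ_{m=0}^{n} x^{ν_p(binom(n,m))} and whose second entry is Σ_{m=0}^{n−1} x^{1 + ν_p(n·binom(n−1,m))} (the second sum being empty, hence 0, when n = 0), where binom denotes the ordinary binomial coefficient. -/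
open Finset

/-!
Let `A n` and `B n` be the two entries of the target vector. By Legendre's formula, if `r ≤ d` then
subtracting `p * m + r` from `p * n + d` needs no borrow in the last digit and
`ν_p (choose (p * n + d) (p * m + r)) = ν_p (choose n m)`; if `d < r` it needs one and the valuation
is `1 + ν_p (n * choose (n - 1) m)`. Sorting the terms of `A (p * n + d)` by the last digit `r`
yields the first row of `M_p(d)`. The second row reduces to the first, because
`B (k + 1) = x ^ (1 + ν_p (k + 1)) * A k`.
-/

section Valuation

variable {p : ℕ} [Fact p.Prime]

lemma padicValNat_factorial_add (a b : ℕ) :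
    padicValNat p (a + b).factorial =
      padicValNat p ((a + b).choose a) + padicValNat p a.factorial +
        padicValNat p b.factorial := by
  have hchoose : (a + b).choose a ≠ 0 := (Nat.choose_pos (Nat.le_add_right a b)).ne'
  rw [← Nat.add_choose_mul_factorial_mul_factorial a b, ← Nat.choose_symm_add,
    padicValNat.mul (mul_ne_zero hchoose a.factorial_ne_zero) b.factorial_ne_zero,
    padicValNat.mul hchoose a.factorial_ne_zero]

lemma padicValNat_factorial_mul_add_eq_add (n : ℕ) {d : ℕ} (hd : d < p) :
    padicValNat p (p * n + d).factorial = padicValNat p n.factorial + n := by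
  rw [padicValNat_factorial_mul_add n hd, padicValNat_factorial_mul]

lemma padicValNat_choose_mul_add_of_le {n m d r : ℕ} (hm : m ≤ n) (hr : r ≤ d) (hd : d < p) :
    padicValNat p ((p * n + d).choose (p * m + r)) = padicValNat p (n.choose m) := by
  obtain ⟨k, rfl⟩ := Nat.exists_eq_add_of_le hm
  obtain ⟨s, rfl⟩ := Nat.exists_eq_add_of_le hr
  have hsplit : p * m + r + (p * k + s) = p * (m + k) + (r + s) := by ring
  have hlarge := padicValNat_factorial_add (p := p) (p * m + r) (p * k + s)
  have hsmall := padicValNat_factorial_add (p := p) m k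
  rw [hsplit, padicValNat_factorial_mul_add_eq_add _ hd,
    padicValNat_factorial_mul_add_eq_add m (by omega),
    padicValNat_factorial_mul_add_eq_add k (by omega)] at hlarge
  omega

lemma padicValNat_choose_mul_add_of_lt {n m d r : ℕ} (hm : m < n) (hr : d < r) (hrp : r < p) :
    padicValNat p ((p * n + d).choose (p * m + r)) =
      1 + padicValNat p (n * (n - 1).choose m) := by
  obtain ⟨k, rfl⟩ := Nat.exists_eq_add_of_lt hm
  obtain ⟨s, hs⟩ : ∃ s, p + d = r + s := Nat.exists_eq_add_of_le (by omega)
  have hsplit : p * m + r + (p * k + s) = p * (m + k + 1) + d := by linear_combination -hs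
  have hlarge := padicValNat_factorial_add (p := p) (p * m + r) (p * k + s)
  have hsmall := padicValNat_factorial_add (p := p) m k
  have hsucc : padicValNat p (m + k + 1).factorial =
      padicValNat p (m + k + 1) + padicValNat p (m + k).factorial := by
    rw [Nat.factorial_succ, padicValNat.mul (m + k).add_one_ne_zero (Nat.factorial_ne_zero _)]
  rw [hsplit, padicValNat_factorial_mul_add_eq_add _ (by omega),
    padicValNat_factorial_mul_add_eq_add m hrp,
    padicValNat_factorial_mul_add_eq_add k (by omega)] at hlarge
  rw [Nat.add_sub_cancel, padicValNat.mul (m + k).add_one_ne_zero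
    (Nat.choose_pos (Nat.le_add_right m k)).ne']
  omega

end Valuation

lemma sum_range_mul_eq_sum_sum {M : Type*} [AddCommMonoid M] (p n : ℕ) (f : ℕ → M) :
    ∑ i ∈ range (p * n), f i = ∑ k ∈ range n, ∑ r ∈ range p, f (p * k + r) := by
  induction n with
  | zero => simp
  | succ n ih => rw [Nat.mul_succ, sum_range_add, ih, sum_range_succ]

/-- The generating function `∑ₘ x ^ ν_p (choose n m)`, `0 ≤ m ≤ n`, evaluated at an element `x` of
a semiring; at `x = X` it is the first entry of the vector computed by the matrix product. -/
def chooseValSum {R : Type*} [Semiring R] (p : ℕ) (x : R) (n : ℕ) : R :=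
  ∑ m ∈ range (n + 1), x ^ padicValNat p (n.choose m)

/-- The companion sum `∑ₘ x ^ (1 + ν_p (n * choose (n - 1) m))`, `0 ≤ m < n`, which is the second
entry of the vector. Its terms are the powers of `x` contributed to `chooseValSum p x (p * n + d)`
by the indices whose last digit exceeds `d`. The truncated `n - 1` is harmless: at `n = 0` the sum
is empty. -/
def borrowValSum {R : Type*} [Semiring R] (p : ℕ) (x : R) (n : ℕ) : R :=
  ∑ m ∈ range n, x ^ (1 + padicValNat p (n * (n - 1).choose m))

/-- The column vector with entries `chooseValSum` and `borrowValSum`, on which `M_p(d)` acts by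
appending the digit `d` to `n`. -/
def valSumVector {R : Type*} [Semiring R] (p : ℕ) (x : R) (n : ℕ) : Matrix (Fin 2) (Fin 1) R :=
  !![chooseValSum p x n; borrowValSum p x n]

@[simp]
lemma chooseValSum_zero {R : Type*} [Semiring R] (p : ℕ) (x : R) : chooseValSum p x 0 = 1 := by
  simp [chooseValSum]

@[simp]
lemma borrowValSum_zero {R : Type*} [Semiring R] (p : ℕ) (x : R) : borrowValSum p x 0 = 0 := by
  simp [borrowValSum]

section Recurrence

variable {p : ℕ} [Fact p.Prime]

section Semiring

variable {R : Type*} [Semiring R] (x : R)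

lemma borrowValSum_succ (k : ℕ) :
    borrowValSum p x (k + 1) = x ^ (1 + padicValNat p (k + 1)) * chooseValSum p x k := by
  rw [borrowValSum, chooseValSum, mul_sum]
  refine sum_congr rfl fun m hm ↦ ?_
  have hchoose : k.choose m ≠ 0 := (Nat.choose_pos (mem_range_succ_iff.mp hm)).ne'
  rw [Nat.add_sub_cancel, padicValNat.mul k.succ_ne_zero hchoose, ← add_assoc, pow_add]

lemma borrowValSum_mul_add_succ (n : ℕ) {d : ℕ} (hd : d + 1 < p) :
    borrowValSum p x (p * n + (d + 1)) = x * chooseValSum p x (p * n + d) := by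
  have hval : padicValNat p (p * n + d + 1) = 0 := by
    refine padicValNat.eq_zero_of_not_dvd fun hdvd ↦ ?_
    rw [add_assoc, Nat.dvd_add_right (dvd_mul_right p n)] at hdvd
    exact Nat.not_dvd_of_pos_of_lt d.succ_pos hd hdvd
  rw [← add_assoc, borrowValSum_succ, hval, add_zero, pow_one]

lemma sum_range_pow_padicValNat_choose_of_le {n m d : ℕ} (hm : m ≤ n) (hd : d < p) :
    ∑ r ∈ range (d + 1), x ^ padicValNat p ((p * n + d).choose (p * m + r)) =
      (d + 1) * x ^ padicValNat p (n.choose m) := by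
  have hterm : ∀ r ∈ range (d + 1), x ^ padicValNat p ((p * n + d).choose (p * m + r)) =
      x ^ padicValNat p (n.choose m) := fun r hr ↦ by
    rw [padicValNat_choose_mul_add_of_le hm (mem_range_succ_iff.mp hr) hd]
  rw [sum_eq_card_nsmul hterm, card_range, nsmul_eq_mul, Nat.cast_succ]

end Semiring

section CommRing

variable {R : Type*} [CommRing R] (x : R)

lemma sum_Ico_pow_padicValNat_choose_of_lt {n m d : ℕ} (hm : m < n) (hd : d < p) :
    ∑ r ∈ Ico (d + 1) p, x ^ padicValNat p ((p * n + d).choose (p * m + r)) =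
      (p - d - 1) * x ^ (1 + padicValNat p (n * (n - 1).choose m)) := by
  have hterm : ∀ r ∈ Ico (d + 1) p, x ^ padicValNat p ((p * n + d).choose (p * m + r)) =
      x ^ (1 + padicValNat p (n * (n - 1).choose m)) := fun r hr ↦ by
    rw [padicValNat_choose_mul_add_of_lt hm (mem_Ico.mp hr).1 (mem_Ico.mp hr).2]
  rw [sum_eq_card_nsmul hterm, Nat.card_Ico, nsmul_eq_mul, Nat.cast_sub hd, Nat.cast_succ, sub_sub]

lemma chooseValSum_mul_add (n : ℕ) {d : ℕ} (hd : d < p) :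
    chooseValSum p x (p * n + d) =
      (d + 1) * chooseValSum p x n + (p - d - 1) * borrowValSum p x n := by
  have hblock : ∀ m ∈ range n,
      ∑ r ∈ range p, x ^ padicValNat p ((p * n + d).choose (p * m + r)) =
        (d + 1) * x ^ padicValNat p (n.choose m) +
          (p - d - 1) * x ^ (1 + padicValNat p (n * (n - 1).choose m)) := fun m hm ↦ by
    rw [← sum_range_add_sum_Ico _ hd,
      sum_range_pow_padicValNat_choose_of_le x (mem_range.mp hm).le hd,
      sum_Ico_pow_padicValNat_choose_of_lt x (mem_range.mp hm) hd]
  simp only [chooseValSum, borrowValSum]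
  rw [add_assoc, sum_range_add, sum_range_mul_eq_sum_sum, sum_congr rfl hblock,
    sum_range_pow_padicValNat_choose_of_le x le_rfl hd, sum_add_distrib, ← mul_sum, ← mul_sum,
    sum_range_succ]
  ring

lemma borrowValSum_mul (n : ℕ) : borrowValSum p x (p * n) = p * x * borrowValSum p x n := by
  obtain _ | k := n
  · simp
  have hp : p.Prime := Fact.out
  have hpred : p * (k + 1) = p * k + (p - 1) + 1 := by
    rw [mul_add_one, add_assoc, Nat.sub_add_cancel hp.one_le]
  have hval : padicValNat p (p * k + (p - 1) + 1) = 1 + padicValNat p (k + 1) := by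
    rw [← hpred, padicValNat.mul hp.ne_zero k.succ_ne_zero, padicValNat_self]
  rw [hpred, borrowValSum_succ, borrowValSum_succ, hval,
    chooseValSum_mul_add x k (Nat.sub_one_lt hp.ne_zero), Nat.cast_pred hp.pos]
  ring

lemma borrowValSum_mul_add (n : ℕ) {d : ℕ} (hd : d < p) :
    borrowValSum p x (p * n + d) =
      d * x * chooseValSum p x n + (p - d) * x * borrowValSum p x n := by
  obtain _ | d := d
  · simp [borrowValSum_mul]
  rw [borrowValSum_mul_add_succ x n hd, chooseValSum_mul_add x n (Nat.lt_of_succ_lt hd)]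
  push_cast
  ring

end CommRing

end Recurrence

lemma Mmat_mul_valSumVector {p : ℕ} [Fact p.Prime] (n : ℕ) {d : ℕ} (hd : d < p) :
    Mmat p d * valSumVector p (Polynomial.X : Polynomial ℤ) n =
      valSumVector p Polynomial.X (p * n + d) := by
  rw [valSumVector, valSumVector, chooseValSum_mul_add _ n hd, borrowValSum_mul_add _ n hd]
  ext1 i j
  fin_cases i <;> fin_cases j <;> simp [Mmat, Matrix.mul_apply, Fin.sum_univ_two]

theorem stmt15 (p : ℕ) (hp : p.Prime) (n : ℕ) :
    ((Nat.digits p n).map (Mmat p)).prod *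
        (!![1; 0] : Matrix (Fin 2) (Fin 1) (Polynomial ℤ)) =
      !![∑ m ∈ Finset.range (n + 1),
           Polynomial.X ^ padicValNat p (Nat.choose n m);
         ∑ m ∈ Finset.range n,
           Polynomial.X ^ (1 + padicValNat p (n * Nat.choose (n - 1) m))] := by
  have : Fact p.Prime := ⟨hp⟩
  change _ = valSumVector p Polynomial.X n
  induction n using Nat.strong_induction_on with
  | _ n ih =>
    obtain rfl | hn := n.eq_zero_or_pos
    · simp [valSumVector]
    · rw [Nat.digits_def' hp.one_lt hn, List.map_cons, List.prod_cons, Matrix.mul_assoc,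
        ih (n / p) (Nat.div_lt_self hn hp.one_lt), Mmat_mul_valSumVector _ (Nat.mod_lt n hp.pos),
        Nat.div_add_mod]
end
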